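/- arXiv:2502.09958 — 2 statements merged into one kernel-verified Lean document; each statement's English description precedes it below -/
import Mathlib

section
/- Let K be a finite geometric simplicial complex in ℝⁿ and let u, v be vertices of K. Then u and v lie in the same path component of the space |K| if and only if v is reachable from u in the 1-skeleton graph G(K). -/
/-!
An edge lies in the space, so a walk in the 1-skeleton traces a path. Conversely, the faces are
closed sets covering the space in a locally finite way. Hence the union of the faces that can be
reached from a given one by successive intersections and the union of all other faces are disjoint
closed sets, and a connected set meeting the first misses the second. Two intersecting faces share a
vertex and any two vertices of one face span an edge, so a chain of intersecting faces yields a walk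
in the 1-skeleton.
-/

open Geometry

namespace PaperAlg

/-- Points of `ℝⁿ`. -/
abbrev Pt (n : ℕ) := EuclideanSpace ℝ (Fin n)

variable {n : ℕ}

/-- The 1-skeleton graph of a geometric simplicial complex `K`: its vertex set is the set of
vertices of `K`, and two vertices are adjacent iff they form an edge (a two-element face) of `K`. -/
def skeletonGraph (K : SimplicialComplex ℝ (Pt n)) : SimpleGraph K.vertices where
  Adj u v := (u : Pt n) ≠ (v : Pt n) ∧
    ∃ s ∈ K.faces, (s : Set (Pt n)) = {(u : Pt n), (v : Pt n)}
  symm := by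
    constructor
    rintro u v ⟨hne, s, hs, hset⟩
    exact ⟨fun h => hne h.symm, s, hs, by rw [hset, Set.pair_comm]⟩
  loopless := by constructor; rintro u ⟨hne, -⟩; exact hne rfl

/-- `K` is 2-dimensional: every face has at most three elements. -/
def TwoDimensional (K : SimplicialComplex ℝ (Pt n)) : Prop :=
  ∀ s ∈ K.faces, s.card ≤ 3

/-- The set of triangles (three-element faces) of `K` containing the finset `e`. -/
def trianglesContaining (K : SimplicialComplex ℝ (Pt n)) (e : Finset (Pt n)) :
    Set (Finset (Pt n)) :=
  {t | t ∈ K.faces ∧ t.card = 3 ∧ e ⊆ t}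

/-- An edge of `K` contained in exactly one triangle. -/
def IsBoundaryEdge (K : SimplicialComplex ℝ (Pt n)) (e : Finset (Pt n)) : Prop :=
  e ∈ K.faces ∧ e.card = 2 ∧ (trianglesContaining K e).ncard = 1

/-- An edge of `K` contained in exactly two triangles. -/
def IsInteriorEdge (K : SimplicialComplex ℝ (Pt n)) (e : Finset (Pt n)) : Prop :=
  e ∈ K.faces ∧ e.card = 2 ∧ (trianglesContaining K e).ncard = 2

/-- The closed upper half-plane `{(a, b) ∈ ℝ² : b ≥ 0}`. -/
def HalfPlane : Set (ℝ × ℝ) := {p | 0 ≤ p.2}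

/-- `x` has a neighborhood in `|K|` homeomorphic to an open subset of `ℝ²`. -/
def HasPlanarNbhd (K : SimplicialComplex ℝ (Pt n)) (x : Pt n) : Prop :=
  ∃ U : Set (Pt n), U ⊆ K.space ∧ U ∈ nhdsWithin x K.space ∧
    ∃ V : Set (ℝ × ℝ), IsOpen V ∧ Nonempty (↥U ≃ₜ ↥V)

/-- `x` has a neighborhood in `|K|` homeomorphic to an open subset of the closed half-plane. -/
def HasHalfPlanarNbhd (K : SimplicialComplex ℝ (Pt n)) (x : Pt n) : Prop :=
  ∃ U : Set (Pt n), U ⊆ K.space ∧ U ∈ nhdsWithin x K.space ∧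
    ∃ V : Set ↥HalfPlane, IsOpen V ∧ Nonempty (↥U ≃ₜ ↥V)

/-- `x` is a locally planar point of `|K|`. -/
def IsLocallyPlanarPt (K : SimplicialComplex ℝ (Pt n)) (x : Pt n) : Prop :=
  x ∈ K.space ∧ (HasPlanarNbhd K x ∨ HasHalfPlanarNbhd K x)

/-- `K` is locally planar if every point of `|K|` is locally planar. -/
def LocallyPlanar (K : SimplicialComplex ℝ (Pt n)) : Prop :=
  ∀ x ∈ K.space, IsLocallyPlanarPt K x

/-- The vertices `a` of `K` such that `{v, a}` is an edge of `K`. -/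
def linkVertices (K : SimplicialComplex ℝ (Pt n)) (v : Pt n) : Set (Pt n) :=
  {a | a ≠ v ∧ ∃ s ∈ K.faces, (s : Set (Pt n)) = {v, a}}

/-- The link graph `L(v)`: vertices are the `a` with `{v, a}` an edge of `K`, and `a`, `b`
are adjacent iff `{v, a, b}` is a triangle of `K`. -/
def linkGraph (K : SimplicialComplex ℝ (Pt n)) (v : Pt n) :
    SimpleGraph (linkVertices K v) where
  Adj a b := (a : Pt n) ≠ (b : Pt n) ∧
    ∃ t ∈ K.faces, t.card = 3 ∧ (t : Set (Pt n)) = {v, (a : Pt n), (b : Pt n)}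
  symm := by
    constructor
    rintro a b ⟨hne, t, ht, hc, hset⟩
    exact ⟨fun h => hne h.symm, t, ht, hc, by rw [hset, Set.pair_comm]⟩
  loopless := by constructor; rintro a ⟨hne, -⟩; exact hne rfl

/-- The vertices of `K` lying on some boundary edge. -/
def boundaryVertices (K : SimplicialComplex ℝ (Pt n)) : Set (Pt n) :=
  {v | ∃ e, IsBoundaryEdge K e ∧ v ∈ e}

/-- The boundary graph of `K`: the simple graph formed by the boundary edges of `K`
and their endpoints. -/
def boundaryGraph (K : SimplicialComplex ℝ (Pt n)) :
    SimpleGraph (boundaryVertices K) where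
  Adj u v := (u : Pt n) ≠ (v : Pt n) ∧
    ∃ e, IsBoundaryEdge K e ∧ (e : Set (Pt n)) = {(u : Pt n), (v : Pt n)}
  symm := by
    constructor
    rintro u v ⟨hne, e, he, hset⟩
    exact ⟨fun h => hne h.symm, e, he, by rw [hset, Set.pair_comm]⟩
  loopless := by constructor; rintro u ⟨hne, -⟩; exact hne rfl

/-- The Euler characteristic `χ(K) = V - E + F`. -/
noncomputable def eulerChar (K : SimplicialComplex ℝ (Pt n)) : ℤ :=
  (K.vertices.ncard : ℤ)
    - ({e : Finset (Pt n) | e ∈ K.faces ∧ e.card = 2}.ncard : ℤ)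
    + ({t : Finset (Pt n) | t ∈ K.faces ∧ t.card = 3}.ncard : ℤ)

/-- The three directed edges induced on its boundary by the cyclic ordering `(a, b, c)`. -/
def triDirs (o : Pt n × Pt n × Pt n) : Set (Pt n × Pt n) :=
  {(o.1, o.2.1), (o.2.1, o.2.2), (o.2.2, o.1)}

/-- `K` is orientable: one can assign to each triangle a cyclic ordering of its vertices so
that the two triangles containing any interior edge induce opposite directions on it. -/
def Orientable (K : SimplicialComplex ℝ (Pt n)) : Prop :=
  ∃ ori : Finset (Pt n) → Pt n × Pt n × Pt n,
    (∀ t ∈ K.faces, t.card = 3 →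
      (t : Set (Pt n)) = {(ori t).1, (ori t).2.1, (ori t).2.2}) ∧
    (∀ t₁ ∈ K.faces, ∀ t₂ ∈ K.faces, t₁.card = 3 → t₂.card = 3 → t₁ ≠ t₂ →
      ∀ e ∈ K.faces, e.card = 2 → e ⊆ t₁ → e ⊆ t₂ →
      ∀ x y : Pt n, x ∈ e → y ∈ e → x ≠ y →
        (x, y) ∈ triDirs (ori t₁) → (y, x) ∈ triDirs (ori t₂))

/-- The genus of a topological space `X`: the supremum of the numbers `m` for which there exist
`m` pairwise disjoint subsets of `X`, each homeomorphic to the circle `S¹`, whose union has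
connected complement. -/
noncomputable def genus (X : Type*) [TopologicalSpace X] : ℕ :=
  sSup {m : ℕ | ∃ C : Fin m → Set X,
    (Pairwise fun i j => Disjoint (C i) (C j)) ∧
    (∀ i, Nonempty (↥(C i) ≃ₜ ↥(Metric.sphere (0 : EuclideanSpace ℝ (Fin 2)) 1))) ∧
    IsConnected (⋃ i, C i)ᶜ}

section ClosedCover

variable {X ι : Type*} [TopologicalSpace X]

theorem reflTransGen_nonempty_inter_of_isPreconnected {C : ι → Set X} (hC : LocallyFinite C)
    (hclosed : ∀ i, IsClosed (C i)) {T : Set X} (hT : IsPreconnected T) (hcover : T ⊆ ⋃ i, C i)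
    {i j : ι} (hi : (T ∩ C i).Nonempty) (hj : (T ∩ C j).Nonempty) :
    Relation.ReflTransGen (fun k l => (C k ∩ C l).Nonempty) i j := by
  set R := Relation.ReflTransGen fun k l => (C k ∩ C l).Nonempty
  by_contra hij
  have hclosed_union (p : ι → Prop) : IsClosed (⋃ k : {k // p k}, C k) :=
    (hC.comp_injective Subtype.val_injective).isClosed_iUnion fun k => hclosed k
  have hsplit : T ⊆ (⋃ k : {k // R i k}, C k) ∪ ⋃ k : {k // ¬R i k}, C k := by
    intro x hx
    obtain ⟨k, hk⟩ := Set.mem_iUnion.1 (hcover hx)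
    by_cases hik : R i k
    · exact .inl (Set.mem_iUnion.2 ⟨⟨k, hik⟩, hk⟩)
    · exact .inr (Set.mem_iUnion.2 ⟨⟨k, hik⟩, hk⟩)
  obtain ⟨x, -, hx, hx'⟩ := isPreconnected_closed_iff.1 hT _ _ (hclosed_union _)
    (hclosed_union _) hsplit
    (hi.mono (Set.inter_subset_inter_right _ (Set.subset_iUnion_of_subset ⟨i, .refl⟩ subset_rfl)))
    (hj.mono (Set.inter_subset_inter_right _ (Set.subset_iUnion_of_subset ⟨j, hij⟩ subset_rfl)))
  obtain ⟨⟨k, hik⟩, hxk⟩ := Set.mem_iUnion.1 hx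
  obtain ⟨⟨l, hil⟩, hxl⟩ := Set.mem_iUnion.1 hx'
  exact hil (hik.tail ⟨x, hxk, hxl⟩)

end ClosedCover

section OneSkeleton

variable {𝕜 E : Type*} [Ring 𝕜] [PartialOrder 𝕜] [AddCommGroup E] [Module 𝕜 E]

/-- The 1-skeleton graph of a simplicial complex in an arbitrary module. For complexes in `ℝⁿ` it
is `skeletonGraph` by definition. -/
def oneSkeleton (K : SimplicialComplex 𝕜 E) : SimpleGraph K.vertices where
  Adj u v := (u : E) ≠ v ∧ ∃ s ∈ K.faces, (s : Set E) = {(u : E), (v : E)}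
  symm.symm := fun _ _ ⟨hne, s, hs, hsuv⟩ => ⟨hne.symm, s, hs, hsuv.trans (Set.pair_comm _ _)⟩
  loopless.irrefl := fun _ h => h.1 rfl

variable {K : SimplicialComplex 𝕜 E}

theorem mem_vertices_of_mem_face {s : Finset E} (hs : s ∈ K.faces) {x : E} (hx : x ∈ s) :
    x ∈ K.vertices :=
  K.down_closed hs (Finset.singleton_subset_iff.2 hx) (Finset.singleton_nonempty x)

theorem inter_nonempty_of_convexHull_inter_nonempty {s t : Finset E} (hs : s ∈ K.faces)
    (ht : t ∈ K.faces) (hst : (convexHull 𝕜 (s : Set E) ∩ convexHull 𝕜 t).Nonempty) :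
    (s ∩ t : Set E).Nonempty :=
  convexHull_nonempty_iff.1 (hst.mono (K.inter_subset_convexHull hs ht))

theorem reachable_of_mem_face {s : Finset E} (hs : s ∈ K.faces) {u v : K.vertices}
    (hu : (u : E) ∈ s) (hv : (v : E) ∈ s) : (oneSkeleton K).Reachable u v := by
  classical
  by_cases huv : u = v
  · exact huv ▸ .refl u
  · have huvs : {(u : E), (v : E)} ⊆ s := Finset.insert_subset hu (Finset.singleton_subset_iff.2 hv)
    exact SimpleGraph.Adj.reachable ⟨Subtype.coe_ne_coe.2 huv, {(u : E), (v : E)},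
      K.down_closed hs huvs (Finset.insert_nonempty _ _), Finset.coe_pair⟩

theorem reachable_of_reflTransGen_inter_nonempty {s t : K.faces}
    (hst : Relation.ReflTransGen (fun a b : K.faces => (a ∩ b : Set E).Nonempty) s t)
    {u v : K.vertices} (hu : (u : E) ∈ s.1) (hv : (v : E) ∈ t.1) :
    (oneSkeleton K).Reachable u v := by
  induction hst generalizing v with
  | refl => exact reachable_of_mem_face s.2 hu hv
  | @tail a b _ hab ih =>
    obtain ⟨w, hwa, hwb⟩ := hab
    exact (ih (v := ⟨w, mem_vertices_of_mem_face a.2 hwa⟩) hwa).trans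
      (reachable_of_mem_face b.2 hwb hv)

end OneSkeleton

section Space

variable {E : Type*} [AddCommGroup E] [Module ℝ E] [TopologicalSpace E] [IsTopologicalAddGroup E]
  [ContinuousSMul ℝ E] {K : SimplicialComplex ℝ E}

theorem joinedIn_space_of_adj {u v : K.vertices} (huv : (oneSkeleton K).Adj u v) :
    JoinedIn K.space (u : E) v := by
  obtain ⟨-, s, hs, hsuv⟩ := huv
  refine .of_segment_subset (subset_trans ?_ (SimplicialComplex.convexHull_subset_space hs))
  rw [hsuv, convexHull_pair]

theorem joinedIn_space_of_reachable {u v : K.vertices} (huv : (oneSkeleton K).Reachable u v) :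
    JoinedIn K.space (u : E) v := by
  obtain ⟨p⟩ := huv
  induction p with
  | nil => exact .refl (SimplicialComplex.vertices_subset_space (Subtype.prop _))
  | cons hadj _ ih => exact (joinedIn_space_of_adj hadj).trans ih

theorem reachable_of_isPreconnected [T2Space E]
    (hK : LocallyFinite fun s : K.faces => (Subtype.val ⁻¹' convexHull ℝ (s : Set E) : Set K.space))
    {T : Set K.space} (hT : IsPreconnected T) {u v : K.vertices}
    (hu : ⟨u, SimplicialComplex.vertices_subset_space u.2⟩ ∈ T)
    (hv : ⟨v, SimplicialComplex.vertices_subset_space v.2⟩ ∈ T) :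
    (oneSkeleton K).Reachable u v := by
  have hclosed (s : K.faces) : IsClosed (Subtype.val ⁻¹' convexHull ℝ (s : Set E) : Set K.space) :=
    (s.1.finite_toSet.isClosed_convexHull ℝ).preimage continuous_subtype_val
  have hcover : T ⊆ ⋃ s : K.faces, Subtype.val ⁻¹' convexHull ℝ (s : Set E) := by
    intro x _
    obtain ⟨s, hs, hxs⟩ := SimplicialComplex.mem_space_iff.1 x.2
    exact Set.mem_iUnion.2 ⟨⟨s, hs⟩, hxs⟩
  have hchain := reflTransGen_nonempty_inter_of_isPreconnected hK hclosed hT hcover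
    (i := ⟨{(u : E)}, u.2⟩) (j := ⟨{(v : E)}, v.2⟩) ⟨_, hu, by simp⟩ ⟨_, hv, by simp⟩
  refine reachable_of_reflTransGen_inter_nonempty (Relation.ReflTransGen.mono ?_ _ _ hchain)
    (Finset.mem_singleton_self _) (Finset.mem_singleton_self _)
  rintro s t ⟨x, hxs, hxt⟩
  exact inter_nonempty_of_convexHull_inter_nonempty s.2 t.2 ⟨x, hxs, hxt⟩

theorem joinedIn_space_iff_reachable_general [T2Space E]
    (hK : LocallyFinite fun s : K.faces => (Subtype.val ⁻¹' convexHull ℝ (s : Set E) : Set K.space))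
    (u v : K.vertices) : JoinedIn K.space (u : E) v ↔ (oneSkeleton K).Reachable u v where
  mp huv := reachable_of_isPreconnected hK isPreconnected_connectedComponent
    mem_connectedComponent (pathComponent_subset_component _ huv.joined_subtype)
  mpr := joinedIn_space_of_reachable

end Space

/-- two vertices lie in the same path component of `|K|` iff they are
reachable from one another in the 1-skeleton graph. -/
theorem joinedIn_space_iff_reachable (K : SimplicialComplex ℝ (Pt n))
    (hfin : K.faces.Finite) (u v : Pt n) (hu : u ∈ K.vertices) (hv : v ∈ K.vertices) :
    JoinedIn K.space u v ↔ (skeletonGraph K).Reachable ⟨u, hu⟩ ⟨v, hv⟩ :=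
  have := hfin.to_subtype
  joinedIn_space_iff_reachable_general (locallyFinite_of_finite _) ⟨u, hu⟩ ⟨v, hv⟩

end PaperAlg
end

section
/- Let K be a finite 2-dimensional geometric simplicial complex in ℝⁿ, let e = {p, q} be an edge of K, and let x = (p + q)/2 be its midpoint. If e is an interior edge, then x has a neighborhood in |K| homeomorphic to an open subset of ℝ². If e is a boundary edge, then x has a neighborhood in |K| homeomorphic to an open subset of the closed half-plane {(a,b) ∈ ℝ² : b ≥ 0} but has no neighborhood in |K| homeomorphic to an open subset of ℝ². -/
open Geometry

namespace PaperAlg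

variable {n : ℕ}

/-
Near the midpoint of an edge `e`, the space `|K|` is the union of the triangles containing `e`. A
single triangle is the affine image of a half diamond, and two triangles sharing only `e` are
parametrised by the whole diamond folded along its horizontal axis.

For the boundary case, the height above `e` is an affine functional that attains its minimum over
the triangle at the midpoint `x`. Every small convex neighbourhood of `x` in the triangle therefore
stays simply connected after removing `x`, being star-shaped about a point of positive height. In
the plane, however, a punctured neighbourhood of a point contains a loop winding around it.
-/

section Planarity

open Set Filter Topology

theorem eq_add_mul_I_of_exp_eq_circleMap {ℓ : ℝ → ℂ} (hℓ : Continuous ℓ) {r : ℝ}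
    (hexp : ∀ θ, Complex.exp (ℓ θ) = circleMap 0 r θ) (θ : ℝ) : ℓ θ = ℓ 0 + θ * Complex.I := by
  have hconst := Complex.isCoveringMap_exp.const_of_comp (g := fun θ : ℝ => ℓ θ - θ * Complex.I)
    (by fun_prop) (fun θ θ' => Subtype.ext (by simp [Complex.exp_sub, hexp, circleMap_zero])) θ 0
  simpa [sub_eq_iff_eq_add] using hconst

/- If the image of `G` contained a small circle around `G x`, a continuous logarithm of `G - G x`
on the simply connected set `{x}ᶜ` would restrict to a periodic logarithm along that circle. -/
theorem range_notMem_nhds_of_isSimplyConnected_compl {X : Type*} [TopologicalSpace X] [T1Space X]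
    [LocallyPathConnectedSpace X] {x : X} (hx : IsSimplyConnected ({x}ᶜ : Set X)) {G : X → ℂ}
    (hG : IsEmbedding G) : range G ∉ 𝓝 (G x) := by
  intro hrange
  obtain ⟨L, hLcont, hL⟩ := Complex.exists_continuousOn_eqOn_exp_comp hx isOpen_compl_singleton
    (g := fun y => G y - G x) (hG.continuous.sub continuous_const).continuousOn
    (by rintro ⟨y, hy, h⟩; exact hy (hG.injective (sub_eq_zero.1 h)))
  obtain ⟨r, hr, hball⟩ := Metric.nhds_basis_closedBall.mem_iff.1 hrange
  choose γ hγ using fun θ => hball (circleMap_mem_closedBall (G x) hr.le θ)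
  have hγcont : Continuous γ := hG.continuous_iff.2 (by
    simpa only [Function.comp_def, hγ] using continuous_circleMap (G x) r)
  have hγx : ∀ θ, γ θ ∈ ({x}ᶜ : Set X) := fun θ h =>
    circleMap_ne_center hr.ne' (by rw [← hγ θ, mem_singleton_iff.1 h])
  have hclosed : γ (2 * Real.pi) = γ 0 := hG.injective (by
    simpa only [hγ, zero_add] using periodic_circleMap (G x) r 0)
  have hturn := eq_add_mul_I_of_exp_eq_circleMap (r := r) (hLcont.comp_continuous hγcont hγx)
    (fun θ => (hL (hγx θ)).trans (by simp [hγ, circleMap])) (2 * Real.pi)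
  simp [hclosed] at hturn

variable {E : Type*} [AddCommGroup E] [Module ℝ E]

theorem starConvex_sdiff_singleton_of_supporting {C : Set E} (hC : Convex ℝ C)
    {f : E →ᵃ[ℝ] ℝ} {x m : E} (hf : ∀ c ∈ C, f x ≤ f c) (hm : m ∈ C) (hfm : f x < f m) :
    StarConvex ℝ m (C \ {x}) := by
  rintro c ⟨hc, hcx⟩ a b ha hb hab
  refine ⟨hC hm hc ha hb hab, fun h => ?_⟩
  have hval : a * f m + b * f c = f x := by
    rw [← mem_singleton_iff.1 h, Convex.combo_affine_apply hab, smul_eq_mul, smul_eq_mul]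
  have hzero : a * (f m - f x) + b * (f c - f x) = 0 := by
    linear_combination hval - f x * hab
  have ha0 : a = 0 := by
    by_contra hne
    linarith [mul_pos (ha.lt_of_ne' hne) (sub_pos.2 hfm), mul_nonneg hb (sub_nonneg.2 (hf c hc))]
  obtain rfl : b = 1 := by linarith
  exact hcx (by simpa [ha0] using h)

variable [TopologicalSpace E] [IsTopologicalAddGroup E] [ContinuousSMul ℝ E]

theorem isSimplyConnected_compl_singleton_of_supporting {C : Set E} (hC : Convex ℝ C)
    {f : E →ᵃ[ℝ] ℝ} {x m : E} (hx : x ∈ C) (hf : ∀ c ∈ C, f x ≤ f c) (hm : m ∈ C)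
    (hfm : f x < f m) : IsSimplyConnected ({⟨x, hx⟩}ᶜ : Set C) := by
  have : ContractibleSpace ↥(C \ {x}) :=
    (starConvex_sdiff_singleton_of_supporting hC hf hm hfm).contractibleSpace
      ⟨m, hm, fun h => hfm.ne' (congrArg f h)⟩
  rw [← IsEmbedding.subtypeVal.isSimplyConnected_image,
    image_compl_eq_range_sdiff_image Subtype.val_injective, Subtype.range_coe, image_singleton]
  exact (inferInstance : SimplyConnectedSpace ↥(C \ {x}))

theorem exists_mem_inter_lt_of_mem_nhds {C : Set E} (hC : Convex ℝ C) {f : E →ᵃ[ℝ] ℝ} {x m : E}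
    (hx : x ∈ C) (hm : m ∈ C) (hfm : f x < f m) {B : Set E} (hB : B ∈ 𝓝 x) :
    ∃ y ∈ B ∩ C, f x < f y := by
  have hnear : ∀ᶠ t : ℝ in 𝓝[>] 0, AffineMap.lineMap x m t ∈ B :=
    nhdsWithin_le_nhds ((AffineMap.lineMap_continuous (p := x) (q := m)).continuousAt
      (by simpa using hB))
  obtain ⟨t, htB, ht0, ht1⟩ := (hnear.and (Ioo_mem_nhdsGT (zero_lt_one (α := ℝ)))).exists
  refine ⟨_, ⟨htB, hC.lineMap_mem hx hm ⟨ht0.le, ht1.le⟩⟩, ?_⟩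
  rw [AffineMap.apply_lineMap]
  exact (left_lt_lineMap_iff_lt ht0).2 hfm

theorem isEmpty_homeomorph_of_supporting [T1Space E] [LocallyConvexSpace ℝ E] {C : Set E}
    (hC : Convex ℝ C) {f : E →ᵃ[ℝ] ℝ} {x m : E} (hx : x ∈ C) (hf : ∀ c ∈ C, f x ≤ f c)
    (hm : m ∈ C) (hfm : f x < f m) {S U : Set E} (hCS : C ⊆ S) (hCx : C ∈ 𝓝[S] x) (hUS : U ⊆ S)
    (hUx : U ∈ 𝓝[S] x) {V : Set (ℝ × ℝ)} (hV : IsOpen V) : IsEmpty (U ≃ₜ V) := by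
  refine ⟨fun φ => ?_⟩
  obtain ⟨O, hO, hOU⟩ := mem_nhdsWithin_iff_exists_mem_nhds_inter.1 hUx
  obtain ⟨B, ⟨hB, hBconv⟩, hBO⟩ := (LocallyConvexSpace.convex_basis (𝕜 := ℝ) x).mem_iff.1 hO
  have hDU : B ∩ C ⊆ U := (inter_subset_inter hBO hCS).trans hOU
  have hDx : B ∩ C ∈ 𝓝[U] x :=
    inter_mem (mem_nhdsWithin_of_mem_nhds hB) (nhdsWithin_mono x hUS hCx)
  have hxD : x ∈ B ∩ C := ⟨mem_of_mem_nhds hB, hx⟩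
  have hDconv : Convex ℝ (B ∩ C) := hBconv.inter hC
  obtain ⟨m', hm', hfm'⟩ := exists_mem_inter_lt_of_mem_nhds hC hx hm hfm hB
  have hsimply := isSimplyConnected_compl_singleton_of_supporting hDconv hxD
    (fun c hc => hf c hc.2) hm' hfm'
  have : LocallyPathConnectedSpace ↥(B ∩ C) := hDconv.locallyPathConnectedSpace
  let ρ : U → ℂ := fun u => Complex.equivRealProdCLM.symm (φ u)
  have hρ : IsOpenEmbedding ρ := (Complex.equivRealProdCLM.symm.toHomeomorph.isOpenEmbedding.comp
    hV.isOpenEmbedding_subtypeVal).comp φ.isOpenEmbedding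
  refine range_notMem_nhds_of_isSimplyConnected_compl hsimply
    (hρ.isEmbedding.comp (IsEmbedding.inclusion hDU)) ?_
  rw [range_comp, range_inclusion]
  exact hρ.isOpenMap.image_mem_nhds (preimage_coe_mem_nhds_subtype.2 hDx)

end Planarity

section Charts

open Set Filter Topology

section Compact

variable {X Y : Type*} [TopologicalSpace X] [TopologicalSpace Y] [T2Space X] {C : Set Y} {F : Y → X}

theorem nonempty_homeomorph_image_of_isCompact (hC : IsCompact C) (hF : ContinuousOn F C)
    (hinj : InjOn F C) {A : Set Y} (hA : A ⊆ C) : Nonempty (↥(F '' A) ≃ₜ A) := by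
  have : CompactSpace C := isCompact_iff_compactSpace.1 hC
  have hembC : IsEmbedding (C.domRestrict F) :=
    (hF.domRestrict.isClosedEmbedding hinj.injective).isEmbedding
  have hembA : IsEmbedding (A.domRestrict F) := hembC.comp (IsEmbedding.inclusion hA)
  exact ⟨(hembA.toHomeomorph.trans (Homeomorph.setCongr (range_domRestrict F A))).symm⟩

theorem image_inter_mem_nhdsWithin_of_isCompact (hC : IsCompact C) (hF : ContinuousOn F C)
    (hinj : InjOn F C) {S : Set X} {c : Y} (hS : F '' C ∈ 𝓝[S] (F c)) (hc : c ∈ C) {W : Set Y}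
    (hW : IsOpen W) (hcW : c ∈ W) : F '' (W ∩ C) ∈ 𝓝[S] (F c) := by
  have hclosed : IsClosed (F '' (C \ W)) :=
    ((hC.diff hW).image_of_continuousOn (hF.mono sdiff_subset)).isClosed
  have hnotMem : F c ∉ F '' (C \ W) := by
    rintro ⟨d, hd, hdc⟩
    exact hd.2 (hinj hd.1 hc hdc ▸ hcW)
  filter_upwards [hS, mem_nhdsWithin_of_mem_nhds (hclosed.isOpen_compl.mem_nhds hnotMem)]
  rintro _ ⟨d, hd, rfl⟩ hdW
  exact ⟨d, ⟨by_contra fun h => hdW ⟨d, ⟨hd, h⟩, rfl⟩, hd⟩, rfl⟩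

end Compact

theorem exists_affineMap_leftInverse_of_injective {k V₁ P₁ V₂ P₂ : Type*} [DivisionRing k]
    [AddCommGroup V₁] [Module k V₁] [AddTorsor V₁ P₁] [AddCommGroup V₂] [Module k V₂]
    [AddTorsor V₂ P₂] {φ : P₁ →ᵃ[k] P₂} (hφ : Function.Injective φ) :
    ∃ ψ : P₂ →ᵃ[k] P₁, Function.LeftInverse ψ φ := by
  obtain ⟨x₀⟩ : Nonempty P₁ := inferInstance
  obtain ⟨g, hg⟩ := φ.linear.exists_leftInverse_of_injective
    (LinearMap.ker_eq_bot.2 (φ.linear_injective_iff.2 hφ))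
  refine ⟨(AffineEquiv.vaddConst k x₀).toAffineMap.comp
    (g.toAffineMap.comp (AffineEquiv.vaddConst k (φ x₀)).symm.toAffineMap), fun x => ?_⟩
  have hgx : g (φ.linear (x -ᵥ x₀)) = x -ᵥ x₀ := LinearMap.congr_fun hg (x -ᵥ x₀)
  change g (φ x -ᵥ φ x₀) +ᵥ x₀ = x
  rw [← φ.linearMap_vsub, hgx, vsub_vadd]

/-- The closed unit ball of the `ℓ¹` norm on `ℝ²`, the parameter domain of the charts below. -/
def diamond : Set (ℝ × ℝ) := {c | |c.1| + |c.2| ≤ 1}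

theorem isCompact_diamond : IsCompact diamond := by
  refine Metric.isCompact_of_isClosed_isBounded (isClosed_le (by fun_prop) (by fun_prop))
    ((Metric.isBounded_closedBall (x := (0 : ℝ × ℝ)) (r := 1)).subset fun c hc => ?_)
  have hc : |c.1| + |c.2| ≤ 1 := hc
  rw [mem_closedBall_zero_iff, Prod.norm_def]
  exact max_le (by rw [Real.norm_eq_abs]; linarith [abs_nonneg c.2])
    (by rw [Real.norm_eq_abs]; linarith [abs_nonneg c.1])

theorem zero_mem_interior_diamond : (0 : ℝ × ℝ) ∈ interior diamond :=
  interior_maximal (t := {c : ℝ × ℝ | |c.1| + |c.2| < 1}) (fun c (hc : |c.1| + |c.2| < 1) => hc.le)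
    (isOpen_lt (by fun_prop) (by fun_prop)) (by simp)

theorem convex_diamond : Convex ℝ diamond := by
  have h := ((convexOn_univ_norm (E := ℝ)).comp_linearMap (LinearMap.fst ℝ ℝ ℝ)).add
    ((convexOn_univ_norm (E := ℝ)).comp_linearMap (LinearMap.snd ℝ ℝ ℝ))
  simpa [diamond] using h.convex_le 1

theorem convex_halfPlane : Convex ℝ HalfPlane :=
  convex_halfSpace_ge (LinearMap.snd ℝ ℝ ℝ).isLinear 0

theorem isClosed_halfPlane : IsClosed HalfPlane :=
  isClosed_le continuous_const continuous_snd

variable {E : Type*} [AddCommGroup E] [Module ℝ E]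

/-- The affine map `ℝ² → E` sending `(-1, 0)`, `(1, 0)`, `(0, 1)` to `p`, `q`, `r`; it sends the
origin to the midpoint of `p` and `q`. -/
noncomputable def triangleChart (p q r : E) : ℝ × ℝ →ᵃ[ℝ] E :=
  ((LinearMap.fst ℝ ℝ ℝ).smulRight ((1 / 2 : ℝ) • (q - p)) +
    (LinearMap.snd ℝ ℝ ℝ).smulRight (r - midpoint ℝ p q)).toAffineMap +
      AffineMap.const ℝ (ℝ × ℝ) (midpoint ℝ p q)

theorem triangleChart_apply (p q r : E) (c : ℝ × ℝ) :
    triangleChart p q r c =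
      ((1 - c.1 - c.2) / 2) • p + ((1 + c.1 - c.2) / 2) • q + c.2 • r := by
  simp only [triangleChart, midpoint_eq_smul_add, AffineMap.coe_add, Pi.add_apply,
    LinearMap.coe_toAffineMap, LinearMap.add_apply, LinearMap.smulRight_apply, LinearMap.fst_apply,
    LinearMap.snd_apply, AffineMap.const_apply, invOf_eq_inv]
  module

theorem triangleChart_zero (p q r : E) : triangleChart p q r 0 = midpoint ℝ p q := by
  simp [triangleChart]

theorem continuous_triangleChart [TopologicalSpace E] [ContinuousAdd E] [ContinuousSMul ℝ E]
    (p q r : E) : Continuous (triangleChart p q r) := by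
  simp only [funext (triangleChart_apply p q r)]
  fun_prop

theorem injective_triangleChart {p q r : E} (h : AffineIndependent ℝ ![p, q, r]) :
    Function.Injective (triangleChart p q r) := by
  let weights (c : ℝ × ℝ) : Fin 3 → ℝ := ![(1 - c.1 - c.2) / 2, (1 + c.1 - c.2) / 2, c.2]
  have hweights : ∀ c, ∑ i, weights c i = 1 := fun c => by
    simp only [weights, Fin.sum_univ_three, Matrix.cons_val]
    ring
  intro c d hcd
  have hweights_eq := h.eq_of_sum_eq_sum (s := Finset.univ) (w₁ := weights c) (w₂ := weights d)
    (by rw [hweights, hweights])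
    (by simpa only [weights, Fin.sum_univ_three, Matrix.cons_val, triangleChart_apply] using hcd)
  have hq : (1 + c.1 - c.2) / 2 = (1 + d.1 - d.2) / 2 := hweights_eq 1 (Finset.mem_univ 1)
  have hr : c.2 = d.2 := hweights_eq 2 (Finset.mem_univ 2)
  exact Prod.ext (by linarith) hr

theorem diamond_inter_halfPlane_eq_convexHull :
    diamond ∩ HalfPlane = convexHull ℝ {((-1 : ℝ), (0 : ℝ)), (1, 0), (0, 1)} := by
  refine Subset.antisymm ?_ (convexHull_min ?_ (convex_diamond.inter convex_halfPlane))
  · rintro c ⟨hc : |c.1| + |c.2| ≤ 1, hc2 : 0 ≤ c.2⟩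
    rw [abs_of_nonneg hc2] at hc
    have hp : 0 ≤ (1 - c.1 - c.2) / 2 := by linarith [le_abs_self c.1]
    have hq : 0 ≤ (1 + c.1 - c.2) / 2 := by linarith [neg_le_abs c.1]
    refine mem_convexHull_of_exists_fintype ![(1 - c.1 - c.2) / 2, (1 + c.1 - c.2) / 2, c.2]
      ![(-1, 0), (1, 0), (0, 1)] ?_ ?_ ?_ ?_
    · intro i
      fin_cases i
      exacts [hp, hq, hc2]
    · simp only [Fin.sum_univ_three, Matrix.cons_val]
      ring
    · simp [Fin.forall_fin_succ]
    · ext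
      · simp only [Fin.sum_univ_three, Matrix.cons_val, Prod.fst_add, Prod.smul_fst, smul_eq_mul]
        ring
      · simp [Fin.sum_univ_three]
  · simp [insert_subset_iff, diamond, HalfPlane]

theorem image_triangleChart (p q r : E) :
    triangleChart p q r '' (diamond ∩ HalfPlane) = convexHull ℝ {p, q, r} := by
  rw [diamond_inter_halfPlane_eq_convexHull, AffineMap.image_convexHull]
  simp [image_insert_eq, image_singleton, triangleChart_apply]

theorem snd_eq_zero_of_triangleChart_mem_convexHull_pair {p q r : E}
    (h : AffineIndependent ℝ ![p, q, r]) {c : ℝ × ℝ}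
    (hc : triangleChart p q r c ∈ convexHull ℝ {p, q}) : c.2 = 0 := by
  have himage : triangleChart p q r '' {(-1, 0), (1, 0)} = {p, q} := by
    simp [image_pair, triangleChart_apply]
  rw [← himage, ← AffineMap.image_convexHull, (injective_triangleChart h).mem_set_image] at hc
  exact convexHull_min (t := {c : ℝ × ℝ | c.2 = 0}) (by simp [insert_subset_iff])
    (convex_hyperplane (f := Prod.snd) ⟨fun _ _ => rfl, fun _ _ => rfl⟩ 0) hc

/-- The map sending the upper half of the diamond onto the triangle `p q r` and the lower half onto
the triangle `p q r'`, folding the plane along the edge `p q`. -/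
noncomputable def twoTriangleChart (p q r r' : E) (c : ℝ × ℝ) : E :=
  if 0 ≤ c.2 then triangleChart p q r c else triangleChart p q r' (c.1, -c.2)

theorem twoTriangleChart_of_nonneg (p q r r' : E) {c : ℝ × ℝ} (hc : 0 ≤ c.2) :
    twoTriangleChart p q r r' c = triangleChart p q r c := if_pos hc

theorem twoTriangleChart_of_nonpos (p q r r' : E) {c : ℝ × ℝ} (hc : c.2 ≤ 0) :
    twoTriangleChart p q r r' c = triangleChart p q r' (c.1, -c.2) := by
  rcases hc.lt_or_eq with hneg | hzero
  · exact if_neg hneg.not_ge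
  · simp [twoTriangleChart, triangleChart_apply, hzero]

theorem twoTriangleChart_zero (p q r r' : E) :
    twoTriangleChart p q r r' 0 = midpoint ℝ p q := by
  rw [twoTriangleChart_of_nonneg _ _ _ _ le_rfl, triangleChart_zero]

theorem continuous_twoTriangleChart [TopologicalSpace E] [ContinuousAdd E] [ContinuousSMul ℝ E]
    (p q r r' : E) : Continuous (twoTriangleChart p q r r') := by
  refine Continuous.if_le (continuous_triangleChart p q r)
    ((continuous_triangleChart p q r').comp (by fun_prop)) continuous_const continuous_snd ?_
  intro c hc
  simp [triangleChart_apply, ← hc]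

theorem image_twoTriangleChart (p q r r' : E) :
    twoTriangleChart p q r r' '' diamond =
      convexHull ℝ {p, q, r} ∪ convexHull ℝ {p, q, r'} := by
  rw [← image_triangleChart, ← image_triangleChart]
  ext x
  constructor
  · rintro ⟨c, hc, rfl⟩
    rcases le_total 0 c.2 with hnonneg | hnonpos
    · exact Or.inl ⟨c, ⟨hc, hnonneg⟩, (twoTriangleChart_of_nonneg p q r r' hnonneg).symm⟩
    · exact Or.inr ⟨(c.1, -c.2), ⟨by simpa [diamond] using hc, neg_nonneg.2 hnonpos⟩,
        (twoTriangleChart_of_nonpos p q r r' hnonpos).symm⟩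
  · rintro (⟨c, ⟨hc, hnonneg⟩, rfl⟩ | ⟨c, ⟨hc, hnonneg⟩, rfl⟩)
    · exact ⟨c, hc, twoTriangleChart_of_nonneg p q r r' hnonneg⟩
    · refine ⟨(c.1, -c.2), by simpa [diamond] using hc, ?_⟩
      rw [twoTriangleChart_of_nonpos p q r r' (neg_nonpos.2 hnonneg), neg_neg]

theorem injOn_twoTriangleChart {p q r r' : E} (h : AffineIndependent ℝ ![p, q, r])
    (h' : AffineIndependent ℝ ![p, q, r'])
    (hinter : convexHull ℝ {p, q, r} ∩ convexHull ℝ {p, q, r'} ⊆ convexHull ℝ {p, q}) :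
    InjOn (twoTriangleChart p q r r') diamond := by
  have hopposite : ∀ c ∈ diamond, ∀ d ∈ diamond, 0 ≤ c.2 → d.2 ≤ 0 →
      twoTriangleChart p q r r' c = twoTriangleChart p q r r' d → c = d := by
    intro c hc d hd hc2 hd2 hcd
    rw [twoTriangleChart_of_nonneg _ _ _ _ hc2, twoTriangleChart_of_nonpos _ _ _ _ hd2] at hcd
    have hedge : triangleChart p q r c ∈ convexHull ℝ {p, q} := by
      refine hinter ⟨image_triangleChart p q r ▸ ⟨c, ⟨hc, hc2⟩, rfl⟩, ?_⟩
      rw [hcd, ← image_triangleChart]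
      exact ⟨_, ⟨by simpa [diamond] using hd, neg_nonneg.2 hd2⟩, rfl⟩
    have hd0 : d.2 = 0 :=
      neg_eq_zero.1 (snd_eq_zero_of_triangleChart_mem_convexHull_pair h' (hcd ▸ hedge))
    refine injective_triangleChart h (hcd.trans ?_)
    simp [triangleChart_apply, hd0]
  intro c hc d hd hcd
  rcases le_total 0 c.2 with hc2 | hc2 <;> rcases le_total 0 d.2 with hd2 | hd2
  · simp only [twoTriangleChart_of_nonneg, hc2, hd2] at hcd
    exact injective_triangleChart h hcd
  · exact hopposite c hc d hd hc2 hd2 hcd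
  · exact (hopposite d hd c hc hd2 hc2 hcd.symm).symm
  · simp only [twoTriangleChart_of_nonpos, hc2, hd2] at hcd
    simpa [Prod.ext_iff] using injective_triangleChart h' hcd

end Charts

section Complex

open Set Topology

theorem card_eq_two_of_coe_eq_pair {α : Type*} {e : Finset α} {p q : α} (hpq : p ≠ q)
    (hepq : (e : Set α) = {p, q}) : e.card = 2 := by
  rw [← ncard_coe_finset, hepq, ncard_pair hpq]

theorem biUnion_convexHull_mem_nhdsWithin_space {E : Type*} [AddCommGroup E] [Module ℝ E]
    [TopologicalSpace E] [IsTopologicalAddGroup E] [ContinuousSMul ℝ E] [T2Space E]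
    {K : SimplicialComplex ℝ E} (hfin : K.faces.Finite) (x : E) :
    ⋃ s ∈ {s ∈ K.faces | x ∈ convexHull ℝ (s : Set E)}, convexHull ℝ (s : Set E) ∈
      𝓝[K.space] x := by
  have havoid : ⋂ s ∈ {s ∈ K.faces | x ∉ convexHull ℝ (s : Set E)}, (convexHull ℝ (s : Set E))ᶜ ∈
      𝓝 x :=
    (Filter.biInter_mem (hfin.subset (sep_subset _ _))).2 fun s hs =>
      (s.finite_toSet.isClosed_convexHull ℝ).isOpen_compl.mem_nhds hs.2
  filter_upwards [mem_nhdsWithin_of_mem_nhds havoid, self_mem_nhdsWithin] with y hy hyK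
  obtain ⟨s, hs, hys⟩ := SimplicialComplex.mem_space_iff.1 hyK
  exact mem_biUnion ⟨hs, by_contra fun hxs => mem_iInter₂.1 hy s ⟨hs, hxs⟩ hys⟩ hys

section Edge

variable {𝕜 E : Type*} [Field 𝕜] [LinearOrder 𝕜] [IsStrictOrderedRing 𝕜] [AddCommGroup E]
  [Module 𝕜 E] {K : SimplicialComplex 𝕜 E} {e s : Finset E} {p q x : E}

theorem left_mem_of_openSegment_mem_convexHull (he : e ∈ K.faces) (hs : s ∈ K.faces) (hpq : p ≠ q)
    (hepq : (e : Set E) = {p, q}) (hx : x ∈ openSegment 𝕜 p q)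
    (hxs : x ∈ convexHull 𝕜 (s : Set E)) : p ∈ s := by
  by_contra hp
  have hxe : x ∈ convexHull 𝕜 (e : Set E) := by
    rw [hepq, convexHull_pair]
    exact openSegment_subset_segment 𝕜 p q hx
  have hsub : (s : Set E) ∩ e ⊆ {q} := by
    rintro y ⟨hys, hye⟩
    rcases hepq ▸ hye with rfl | hyq
    exacts [absurd hys hp, hyq]
  have hxq : x ∈ convexHull 𝕜 {q} :=
    convexHull_mono hsub (K.inter_subset_convexHull hs he ⟨hxs, hxe⟩)
  rw [convexHull_singleton, mem_singleton_iff] at hxq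
  exact hpq (right_mem_openSegment_iff.1 (hxq ▸ hx))

theorem edge_subset_of_openSegment_mem_convexHull (he : e ∈ K.faces) (hs : s ∈ K.faces)
    (hpq : p ≠ q) (hepq : (e : Set E) = {p, q}) (hx : x ∈ openSegment 𝕜 p q)
    (hxs : x ∈ convexHull 𝕜 (s : Set E)) : e ⊆ s := by
  rw [← Finset.coe_subset, hepq]
  exact pair_subset (left_mem_of_openSegment_mem_convexHull he hs hpq hepq hx hxs)
    (left_mem_of_openSegment_mem_convexHull he hs hpq.symm (hepq.trans (pair_comm p q))
      (openSegment_symm 𝕜 p q ▸ hx) hxs)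

end Edge

variable {K : SimplicialComplex ℝ (Pt n)} {e t : Finset (Pt n)} {p q : Pt n}

theorem biUnion_trianglesContaining_mem_nhdsWithin (hfin : K.faces.Finite)
    (hdim : TwoDimensional K) (he : e ∈ K.faces) (hpq : p ≠ q)
    (hepq : (e : Set (Pt n)) = {p, q}) (hne : (trianglesContaining K e).Nonempty) {x : Pt n}
    (hx : x ∈ openSegment ℝ p q) :
    ⋃ t ∈ trianglesContaining K e, convexHull ℝ (t : Set (Pt n)) ∈ 𝓝[K.space] x := by
  refine Filter.mem_of_superset (biUnion_convexHull_mem_nhdsWithin_space hfin x)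
    (iUnion₂_subset ?_)
  rintro s ⟨hs, hxs⟩
  have hes := edge_subset_of_openSegment_mem_convexHull he hs hpq hepq hx hxs
  have hecard := card_eq_two_of_coe_eq_pair hpq hepq
  rcases (hdim s hs).eq_or_lt with hs3 | hs3
  · exact subset_biUnion_of_mem (u := fun t : Finset (Pt n) => convexHull ℝ (t : Set (Pt n)))
      (show s ∈ trianglesContaining K e from ⟨hs, hs3, hes⟩)
  · obtain ⟨t, ht⟩ := hne
    obtain rfl : e = s := Finset.eq_of_subset_of_card_le hes (by lia)
    exact subset_iUnion₂_of_subset t ht (convexHull_mono (Finset.coe_subset.2 ht.2.2))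

theorem exists_eq_insert_of_mem_trianglesContaining (hpq : p ≠ q)
    (hepq : (e : Set (Pt n)) = {p, q}) (ht : t ∈ trianglesContaining K e) :
    ∃ r, (t : Set (Pt n)) = {p, q, r} ∧ AffineIndependent ℝ ![p, q, r] := by
  obtain ⟨htK, ht3, het⟩ := ht
  have hecard := card_eq_two_of_coe_eq_pair hpq hepq
  obtain ⟨r, hre, hrt⟩ := Finset.exists_eq_insert_iff.2 ⟨het, by rw [hecard, ht3]⟩
  have hset : (t : Set (Pt n)) = {p, q, r} := by
    rw [← hrt, Finset.coe_insert, hepq, insert_comm r p {q}, pair_comm r q]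
  obtain ⟨hrp, hrq⟩ : r ≠ p ∧ r ≠ q := by
    rw [← Finset.mem_coe, hepq] at hre
    simpa only [mem_insert_iff, mem_singleton_iff, not_or] using hre
  refine ⟨r, hset, AffineIndependent.of_set_of_injective ?_ ?_⟩
  · have hrange : range ![p, q, r] = t := by
      rw [hset, Matrix.range_cons, Matrix.range_cons_cons_empty, singleton_union]
    rw [hrange]
    exact K.indep htK
  · exact Fin.cons_injective_iff.2
      ⟨by simp [hpq, hrp.symm], injective_pair_iff_ne.2 hrq.symm⟩

theorem exists_triangle_of_isBoundaryEdge (hfin : K.faces.Finite) (hdim : TwoDimensional K)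
    (hpq : p ≠ q) (hepq : (e : Set (Pt n)) = {p, q}) (he : IsBoundaryEdge K e) :
    ∃ r, AffineIndependent ℝ ![p, q, r] ∧ convexHull ℝ {p, q, r} ⊆ K.space ∧
      convexHull ℝ {p, q, r} ∈ 𝓝[K.space] (midpoint ℝ p q) := by
  obtain ⟨t, htri⟩ := ncard_eq_one.1 he.2.2
  have ht : t ∈ trianglesContaining K e := htri ▸ mem_singleton t
  obtain ⟨r, htr, hr⟩ := exists_eq_insert_of_mem_trianglesContaining hpq hepq ht
  have hnhds := biUnion_trianglesContaining_mem_nhdsWithin hfin hdim he.1 hpq hepq ⟨t, ht⟩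
    (midpoint_mem_openSegment p q)
  rw [htri, biUnion_singleton] at hnhds
  refine ⟨r, hr, ?_⟩
  rw [← htr]
  exact ⟨K.convexHull_subset_space ht.1, hnhds⟩

theorem exists_triangles_of_isInteriorEdge (hfin : K.faces.Finite) (hdim : TwoDimensional K)
    (hpq : p ≠ q) (hepq : (e : Set (Pt n)) = {p, q}) (he : IsInteriorEdge K e) :
    ∃ r r', AffineIndependent ℝ ![p, q, r] ∧ AffineIndependent ℝ ![p, q, r'] ∧
      convexHull ℝ {p, q, r} ∩ convexHull ℝ {p, q, r'} ⊆ convexHull ℝ {p, q} ∧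
      convexHull ℝ {p, q, r} ∪ convexHull ℝ {p, q, r'} ⊆ K.space ∧
      convexHull ℝ {p, q, r} ∪ convexHull ℝ {p, q, r'} ∈ 𝓝[K.space] (midpoint ℝ p q) := by
  obtain ⟨t, t', htt', htri⟩ := ncard_eq_two.1 he.2.2
  have ht : t ∈ trianglesContaining K e := htri ▸ mem_insert t {t'}
  have ht' : t' ∈ trianglesContaining K e := htri ▸ mem_insert_of_mem t rfl
  obtain ⟨r, htr, hr⟩ := exists_eq_insert_of_mem_trianglesContaining hpq hepq ht
  obtain ⟨r', htr', hr'⟩ := exists_eq_insert_of_mem_trianglesContaining hpq hepq ht'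
  have hnhds := biUnion_trianglesContaining_mem_nhdsWithin hfin hdim he.1 hpq hepq ⟨t, ht⟩
    (midpoint_mem_openSegment p q)
  rw [htri, biUnion_pair] at hnhds
  have hrr' : r ≠ r' := by
    rintro rfl
    exact htt' (Finset.coe_injective (htr.trans htr'.symm))
  have hcommon : (t : Set (Pt n)) ∩ t' ⊆ {p, q} := by
    rw [htr, htr']
    grind
  refine ⟨r, r', hr, hr', ?_⟩
  rw [← htr, ← htr']
  exact ⟨(K.inter_subset_convexHull ht.1 ht'.1).trans (convexHull_mono hcommon),
    union_subset (K.convexHull_subset_space ht.1) (K.convexHull_subset_space ht'.1), hnhds⟩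

theorem hasPlanarNbhd_midpoint_of_isInteriorEdge (hfin : K.faces.Finite) (hdim : TwoDimensional K)
    (hpq : p ≠ q) (hepq : (e : Set (Pt n)) = {p, q}) (he : IsInteriorEdge K e) :
    HasPlanarNbhd K (midpoint ℝ p q) := by
  obtain ⟨r, r', hr, hr', hinter, hsub, hnhds⟩ :=
    exists_triangles_of_isInteriorEdge hfin hdim hpq hepq he
  have hcont := (continuous_twoTriangleChart p q r r').continuousOn (s := diamond)
  have hinj := injOn_twoTriangleChart hr hr' hinter
  rw [← image_twoTriangleChart] at hsub hnhds
  rw [← twoTriangleChart_zero p q r r'] at hnhds ⊢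
  have hW := image_inter_mem_nhdsWithin_of_isCompact isCompact_diamond hcont hinj hnhds
    (interior_subset zero_mem_interior_diamond) isOpen_interior zero_mem_interior_diamond
  rw [inter_eq_left.2 interior_subset] at hW
  exact ⟨_, (image_mono interior_subset).trans hsub, hW, _, isOpen_interior,
    nonempty_homeomorph_image_of_isCompact isCompact_diamond hcont hinj interior_subset⟩

theorem hasHalfPlanarNbhd_midpoint_of_isBoundaryEdge (hfin : K.faces.Finite)
    (hdim : TwoDimensional K) (hpq : p ≠ q) (hepq : (e : Set (Pt n)) = {p, q})
    (he : IsBoundaryEdge K e) : HasHalfPlanarNbhd K (midpoint ℝ p q) := by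
  obtain ⟨r, hr, hsub, hnhds⟩ := exists_triangle_of_isBoundaryEdge hfin hdim hpq hepq he
  have hcompact := isCompact_diamond.inter_right isClosed_halfPlane
  have hcont := (continuous_triangleChart p q r).continuousOn (s := diamond ∩ HalfPlane)
  have hinj := (injective_triangleChart hr).injOn (s := diamond ∩ HalfPlane)
  rw [← image_triangleChart] at hsub hnhds
  rw [← triangleChart_zero p q r] at hnhds ⊢
  have hW := image_inter_mem_nhdsWithin_of_isCompact hcompact hcont hinj hnhds
    ⟨interior_subset zero_mem_interior_diamond, le_refl (0 : ℝ)⟩ isOpen_interior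
    zero_mem_interior_diamond
  rw [← inter_assoc, inter_eq_left.2 interior_subset] at hW
  have hmono : interior diamond ∩ HalfPlane ⊆ diamond ∩ HalfPlane :=
    inter_subset_inter_left _ interior_subset
  obtain ⟨φ⟩ := nonempty_homeomorph_image_of_isCompact hcompact hcont hinj hmono
  have hval : Subtype.val '' (Subtype.val ⁻¹' interior diamond : Set HalfPlane) =
      interior diamond ∩ HalfPlane := by
    rw [Subtype.image_preimage_coe, inter_comm]
  exact ⟨_, (image_mono hmono).trans hsub, hW, _, isOpen_interior.preimage continuous_subtype_val,
    ⟨φ.trans ((Homeomorph.setCongr hval.symm).trans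
      (IsEmbedding.subtypeVal.homeomorphImage _).symm)⟩⟩

theorem not_hasPlanarNbhd_midpoint_of_isBoundaryEdge (hfin : K.faces.Finite)
    (hdim : TwoDimensional K) (hpq : p ≠ q) (hepq : (e : Set (Pt n)) = {p, q})
    (he : IsBoundaryEdge K e) : ¬ HasPlanarNbhd K (midpoint ℝ p q) := by
  rintro ⟨U, hUK, hU, V, hV, ⟨φ⟩⟩
  obtain ⟨r, hr, hsub, hnhds⟩ := exists_triangle_of_isBoundaryEdge hfin hdim hpq hepq he
  obtain ⟨ψ, hψ⟩ := exists_affineMap_leftInverse_of_injective (injective_triangleChart hr)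
  have hconv := convex_convexHull ℝ ({p, q, r} : Set (Pt n))
  rw [← image_triangleChart] at hsub hnhds hconv
  rw [← triangleChart_zero p q r] at hU hnhds
  have hzero : (0 : ℝ × ℝ) ∈ diamond ∩ HalfPlane :=
    ⟨interior_subset zero_mem_interior_diamond, le_refl (0 : ℝ)⟩
  have hapex : ((0, 1) : ℝ × ℝ) ∈ diamond ∩ HalfPlane := by simp [diamond, HalfPlane]
  let height : Pt n →ᵃ[ℝ] ℝ := (LinearMap.snd ℝ ℝ ℝ).toAffineMap.comp ψ
  have hheight : ∀ c, height (triangleChart p q r c) = c.2 := fun c => congrArg Prod.snd (hψ c)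
  have hheight_nonneg : ∀ y ∈ triangleChart p q r '' (diamond ∩ HalfPlane),
      height (triangleChart p q r 0) ≤ height y := by
    rintro _ ⟨c, hc, rfl⟩
    rw [hheight, hheight]
    exact hc.2
  exact (isEmpty_homeomorph_of_supporting hconv (mem_image_of_mem _ hzero) hheight_nonneg
    (mem_image_of_mem _ hapex) (by rw [hheight, hheight]; exact one_pos) hsub hnhds hUK hU
    hV).false φ

end Complex

/-- the midpoint of an interior edge has a neighborhood in `|K|` homeomorphic to an
open subset of `ℝ²`; the midpoint of a boundary edge has a neighborhood homeomorphic to an open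
subset of the closed half-plane but no neighborhood homeomorphic to an open subset of `ℝ²`. -/
theorem midpoint_nbhd_of_interior_or_boundary (K : SimplicialComplex ℝ (Pt n))
    (hfin : K.faces.Finite) (hdim : TwoDimensional K)
    (e : Finset (Pt n)) (he : e ∈ K.faces) (p q : Pt n) (hpq : p ≠ q)
    (hepq : (e : Set (Pt n)) = {p, q}) :
    (IsInteriorEdge K e → HasPlanarNbhd K (midpoint ℝ p q)) ∧
    (IsBoundaryEdge K e →
      HasHalfPlanarNbhd K (midpoint ℝ p q) ∧ ¬ HasPlanarNbhd K (midpoint ℝ p q)) := by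
  refine ⟨hasPlanarNbhd_midpoint_of_isInteriorEdge hfin hdim hpq hepq, fun hbdry => ⟨?_, ?_⟩⟩
  · exact hasHalfPlanarNbhd_midpoint_of_isBoundaryEdge hfin hdim hpq hepq hbdry
  · exact not_hasPlanarNbhd_midpoint_of_isBoundaryEdge hfin hdim hpq hepq hbdry

end PaperAlg
end
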